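/- Let n ≥ 2 and 0 < a < b. Suppose u and v are C² on Ā, that f and g are continuous on Ā with −Δu(x) = f(x) and −Δv(x) = g(x) for every x ∈ A, and that ∫_S f(rξ) dσ(ξ) = ∫_S g(rξ) dσ(ξ) for every r ∈ (a,b). Then the function r ↦ r^{n−1} ∫_S D(u−v)(rξ)(ξ) dσ(ξ) is constant on [a,b]; that is, for all r₁, r₂ ∈ [a,b], r₂^{n−1} ∫_S D(u−v)(r₂ξ)(ξ) dσ(ξ) = r₁^{n−1} ∫_S D(u−v)(r₁ξ)(ξ) dσ(ξ). -/

import Mathlib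

open MeasureTheory Metric Set Real
open scoped InnerProductSpace ENNReal Classical

noncomputable section

abbrev Euc (n : ℕ) := EuclideanSpace ℝ (Fin n)

/-- The Laplacian: sum of second partial derivatives. -/
def lap {n : ℕ} (u : Euc n → ℝ) (x : Euc n) : ℝ :=
  ∑ i : Fin n, fderiv ℝ (fun y => fderiv ℝ u y (EuclideanSpace.single i 1)) x
    (EuclideanSpace.single i 1)

/-- Surface measure on the unit sphere: (n-1)-dimensional Hausdorff measure restricted
to the sphere. -/
def sphereMeasure (n : ℕ) : Measure (Euc n) :=
  (μH[(n : ℝ) - 1]).restrict (sphere (0 : Euc n) 1)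

/-- First standard basis vector. -/
def e₁ (n : ℕ) : Euc n := if h : 0 < n then EuclideanSpace.single (⟨0, h⟩ : Fin n) 1 else 0

/-- Open polar cap of geodesic radius θ centered at e₁. -/
def polarCap (n : ℕ) (θ : ℝ) : Set (Euc n) :=
  {ξ | ξ ∈ sphere (0 : Euc n) 1 ∧ Real.cos θ < ⟪e₁ n, ξ⟫_ℝ}

/-- Decreasing rearrangement of `g` with respect to the measure `μ`. -/
def decRearr {X : Type*} [MeasurableSpace X] (μ : Measure X) (g : X → ℝ) (t : ℝ) : ℝ :=
  sInf {s : ℝ | μ {x | s < g x} ≤ ENNReal.ofReal t}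

/-- Spherical rearrangement of a function on the unit sphere. -/
def sphRearr (n : ℕ) (g : Euc n → ℝ) (ξ : Euc n) : ℝ :=
  decRearr (sphereMeasure n) g
    ((sphereMeasure n (polarCap n (Real.arccos ⟪e₁ n, ξ⟫_ℝ))).toReal)

/-- Cap symmetrization: spherical rearrangement sphere-by-sphere. -/
def capSymm (n : ℕ) (f : Euc n → ℝ) (x : Euc n) : ℝ :=
  if x = 0 then f 0 else sphRearr n (fun ξ => f (‖x‖ • ξ)) (‖x‖⁻¹ • x)

/-- Open spherical shell. -/
def shell (n : ℕ) (a b : ℝ) : Set (Euc n) := {x | a < ‖x‖ ∧ ‖x‖ < b}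

/-- `u` is C² on an open neighborhood of the closure of `A`. -/
def IsC2OnClosure {n : ℕ} (u : Euc n → ℝ) (A : Set (Euc n)) : Prop :=
  ∃ U, IsOpen U ∧ closure A ⊆ U ∧ ContDiffOn ℝ 2 u U

open Topology in
theorem hausdorff_sphere_lt_top {n : ℕ} (hn : 2 ≤ n) :
    (μH[(n : ℝ) - 1] : Measure (Euc n)) (sphere (0 : Euc n) 1) < ⊤ := by
  refine (isCompact_sphere (0 : Euc n) 1).measure_lt_top_of_nhdsWithin ?_
  intro x hx
  have hx1 : ‖x‖ = 1 := by simpa using hx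
  have hx0 : x ≠ 0 := by rintro rfl; simp at hx1
  have hnn : ((n - 1 : ℕ) : ℝ) = (n : ℝ) - 1 := by
    rw [Nat.cast_sub (by omega)]; simp
  have : Fact (Module.finrank ℝ (Euc n) = (n - 1) + 1) := ⟨by simp; omega⟩
  have hfr : Module.finrank ℝ (Fin (n - 1) → ℝ) = Module.finrank ℝ (ℝ ∙ x)ᗮ := by
    rw [Submodule.finrank_orthogonal_span_singleton (n := n - 1) hx0]; simp
  let L : (Fin (n - 1) → ℝ) ≃L[ℝ] (ℝ ∙ x)ᗮ := ContinuousLinearEquiv.ofFinrankEq hfr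
  let G : (Fin (n - 1) → ℝ) → Euc n := fun y =>
    (L y : Euc n) + Real.sqrt (1 - ‖(L y : Euc n)‖ ^ 2) • x
  have hL : ContDiff ℝ 1 (fun y => (L y : Euc n)) :=
    ((ℝ ∙ x)ᗮ.subtypeL.contDiff).comp L.contDiff
  have hG : ContDiffAt ℝ 1 G 0 := by
    have hs : ContDiffAt ℝ 1 (fun y => Real.sqrt (1 - ‖(L y : Euc n)‖ ^ 2)) 0 := by
      refine ContDiffAt.sqrt ?_ (by simp)
      exact contDiffAt_const.sub (hL.contDiffAt.norm_sq ℝ)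
    have hs2 : ContDiffAt ℝ 1 (fun y => Real.sqrt (1 - ‖(L y : Euc n)‖ ^ 2) • x) 0 :=
      hs.smul contDiffAt_const
    exact hL.contDiffAt.add hs2
  obtain ⟨K, t, ht, hK⟩ := hG.exists_lipschitzOnWith
  have hmem : ∀ z : Euc n, z - ⟪x, z⟫_ℝ • x ∈ (ℝ ∙ x)ᗮ := by
    intro z
    rw [Submodule.mem_orthogonal_singleton_iff_inner_right, inner_sub_right, inner_smul_right,
      real_inner_self_eq_norm_sq, hx1]
    simp
  let P : Euc n → (Fin (n - 1) → ℝ) := fun z => L.symm ⟨z - ⟪x, z⟫_ℝ • x, hmem z⟩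
  have hPc : Continuous P :=
    L.symm.continuous.comp (Continuous.subtype_mk (by fun_prop) hmem)
  have hPx : P x = 0 := by
    have : (⟨x - ⟪x, x⟫_ℝ • x, hmem x⟩ : (ℝ ∙ x)ᗮ) = 0 := by
      ext1
      simp [hx1]
    simp only [P, this, map_zero]
  have ht' : t ∩ ball 0 1 ∈ 𝓝 (P x) := by
    rw [hPx]; exact Filter.inter_mem ht (ball_mem_nhds _ one_pos)
  have hpos : {z : Euc n | 0 < ⟪x, z⟫_ℝ} ∈ 𝓝 x := by
    apply IsOpen.mem_nhds
    · exact isOpen_lt continuous_const (by fun_prop)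
    · simp [hx1]
  refine ⟨G '' (t ∩ ball 0 1), ?_, ?_⟩
  · rw [mem_nhdsWithin_iff_eventually]
    filter_upwards [hPc.continuousAt ht', hpos] with z hz hz0 hzS
    refine ⟨P z, hz, ?_⟩
    have hz1 : ‖z‖ = 1 := by simpa using hzS
    have h1 : (L (P z) : Euc n) = z - ⟪x, z⟫_ℝ • x := by
      simp only [P, ContinuousLinearEquiv.apply_symm_apply]
    simp only [G, h1]
    have h3 : 1 - ‖z - ⟪x, z⟫_ℝ • x‖ ^ 2 = ⟪x, z⟫_ℝ ^ 2 := by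
      rw [norm_sub_sq_real, norm_smul, hx1, hz1, inner_smul_right, real_inner_comm]
      simp; ring
    rw [h3, Real.sqrt_sq (le_of_lt hz0)]
    abel
  · have := (hK.mono (inter_subset_left (t := ball 0 1))).hausdorffMeasure_image_le
      (d := (n : ℝ) - 1) (by rw [← hnn]; positivity)
    refine this.trans_lt (ENNReal.mul_lt_top ?_ ?_)
    · exact ENNReal.rpow_lt_top_of_nonneg (by rw [← hnn]; positivity) (by simp)
    · refine (measure_mono inter_subset_right).trans_lt ?_
      have h := hausdorffMeasure_pi_real (ι := Fin (n - 1))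
      rw [Fintype.card_fin, hnn] at h
      rw [h]
      exact measure_ball_lt_top

theorem finite_sphereMeasure {n : ℕ} (hn : 2 ≤ n) : IsFiniteMeasure (sphereMeasure n) :=
  ⟨by simpa [sphereMeasure] using hausdorff_sphere_lt_top hn⟩

theorem ae_sphere {n : ℕ} : ∀ᵐ ξ ∂(sphereMeasure n), ξ ∈ sphere (0 : Euc n) 1 :=
  ae_restrict_mem isClosed_sphere.measurableSet

theorem integrable_sphere {n : ℕ} (hn : 2 ≤ n) {h : Euc n → ℝ}
    (hc : ContinuousOn h (sphere (0 : Euc n) 1)) : Integrable h (sphereMeasure n) := by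
  have := hc.integrableOn_of_subset_isCompact (μ := μH[(n : ℝ) - 1]) (isCompact_sphere (0 : Euc n) 1)
    isClosed_sphere.measurableSet subset_rfl (hausdorff_sphere_lt_top hn).ne
  exact this

open Topology in
theorem hasDerivAt_sphere {n : ℕ} (hn : 2 ≤ n) {O : Set (ℝ × Euc n)} (hO : IsOpen O)
    {G : ℝ × Euc n → ℝ} (hG : ContDiffOn ℝ 1 G O) {t₀ : ℝ}
    (h : ∀ ξ ∈ sphere (0 : Euc n) 1, (t₀, ξ) ∈ O) :
    HasDerivAt (fun t => ∫ ξ, G (t, ξ) ∂(sphereMeasure n))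
      (∫ ξ, fderiv ℝ G (t₀, ξ) (1, 0) ∂(sphereMeasure n)) t₀ := by
  have := finite_sphereMeasure hn
  have hcG' : ContinuousOn (fun p => fderiv ℝ G p (1, 0)) O :=
    (hG.continuousOn_fderiv_of_isOpen hO le_rfl).clm_apply continuousOn_const
  have hev : ∀ᶠ t in 𝓝 t₀, ∀ ξ ∈ sphere (0 : Euc n) 1, (t, ξ) ∈ O :=
    (isCompact_sphere (0 : Euc n) 1).eventually_forall_of_forall_eventually
      (P := fun t ξ => (t, ξ) ∈ O) fun ξ hξ => hO.mem_nhds (h ξ hξ)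
  obtain ⟨ε, hε, hball⟩ := Metric.nhds_basis_closedBall.eventually_iff.1 hev
  have hsub : closedBall t₀ ε ×ˢ sphere (0 : Euc n) 1 ⊆ O := fun p hp => hball hp.1 p.2 hp.2
  obtain ⟨C, hC⟩ := ((isCompact_closedBall t₀ ε).prod
    (isCompact_sphere (0 : Euc n) 1)).exists_bound_of_continuousOn (hcG'.mono hsub)
  have hsl : ∀ (g : ℝ × Euc n → ℝ), ContinuousOn g O → ∀ t ∈ closedBall t₀ ε,
      Integrable (fun ξ => g (t, ξ)) (sphereMeasure n) := by
    intro g hg t ht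
    apply integrable_sphere hn
    exact hg.comp (by fun_prop) fun ξ hξ => hball ht ξ hξ
  refine (hasDerivAt_integral_of_dominated_loc_of_deriv_le (s := closedBall t₀ ε)
    (F := fun t ξ => G (t, ξ)) (F' := fun t ξ => fderiv ℝ G (t, ξ) (1, 0))
    (bound := fun _ => C)
    (closedBall_mem_nhds _ hε) ?_ ?_ ?_ ?_ (integrable_const C) ?_).2
  · filter_upwards [closedBall_mem_nhds t₀ hε] with t ht
    exact (hsl G hG.continuousOn t ht).1
  · exact hsl G hG.continuousOn t₀ (mem_closedBall_self hε.le)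
  · exact (hsl _ hcG' t₀ (mem_closedBall_self hε.le)).1
  · filter_upwards [ae_sphere] with ξ hξ t ht
    exact hC (t, ξ) ⟨ht, hξ⟩
  · filter_upwards [ae_sphere] with ξ hξ t ht
    have h1 : HasFDerivAt G (fderiv ℝ G (t, ξ)) (t, ξ) :=
      ((hG.contDiffAt (hO.mem_nhds (hball ht ξ hξ))).differentiableAt one_ne_zero).hasFDerivAt
    have h2 : HasDerivAt (fun s : ℝ => (s, ξ)) ((1 : ℝ), (0 : Euc n)) t :=
      (hasDerivAt_id t).prodMk (hasDerivAt_const t ξ)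
    exact h1.comp_hasDerivAt t h2

/-- Rotation by angle `t` in the coordinate plane `(i, j)`. -/
def rotIJ {n : ℕ} (i j : Fin n) (t : ℝ) (x : Euc n) : Euc n :=
  x + ((Real.cos t - 1) * x i - Real.sin t * x j) • EuclideanSpace.single i (1 : ℝ)
    + (Real.sin t * x i + (Real.cos t - 1) * x j) • EuclideanSpace.single j (1 : ℝ)

theorem rotIJ_norm {n : ℕ} {i j : Fin n} (hij : i ≠ j) (t : ℝ) (x : Euc n) :
    ‖rotIJ i j t x‖ = ‖x‖ := by
  have h : ‖rotIJ i j t x‖ ^ 2 = ‖x‖ ^ 2 := by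
    have hji := hij.symm
    rw [← real_inner_self_eq_norm_sq, ← real_inner_self_eq_norm_sq]
    simp only [rotIJ, inner_add_left, inner_add_right, inner_smul_left, inner_smul_right,
      EuclideanSpace.inner_single_left, EuclideanSpace.inner_single_right]
    simp [hij, hji]
    linear_combination (x i ^ 2 + x j ^ 2) * Real.sin_sq_add_cos_sq t
  exact (sq_eq_sq₀ (norm_nonneg _) (norm_nonneg _)).1 h

/-- The rotation as a linear isometry equivalence. -/
def rotE {n : ℕ} {i j : Fin n} (hij : i ≠ j) (t : ℝ) : Euc n ≃ₗᵢ[ℝ] Euc n :=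
  LinearIsometry.toLinearIsometryEquiv
    (⟨{ toFun := rotIJ i j t
        map_add' := by intro x y; simp only [rotIJ, PiLp.add_apply]; module
        map_smul' := by
          intro c x; simp only [rotIJ, PiLp.smul_apply, smul_eq_mul, RingHom.id_apply]; module },
      rotIJ_norm hij t⟩ : Euc n →ₗᵢ[ℝ] Euc n) rfl

theorem integral_rot {n : ℕ} {i j : Fin n} (hij : i ≠ j) (t : ℝ) (h : Euc n → ℝ) :
    ∫ ξ, h (rotIJ i j t ξ) ∂(sphereMeasure n) = ∫ ξ, h ξ ∂(sphereMeasure n) := by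
  have h1 := (rotE hij t).toIsometryEquiv.measurePreserving_hausdorffMeasure ((n : ℝ) - 1)
  have h2 := h1.restrict_preimage (isClosed_sphere (x := (0 : Euc n)) (ε := 1)).measurableSet
  have h3 : (rotE hij t).toIsometryEquiv ⁻¹' sphere (0 : Euc n) 1 = sphere (0 : Euc n) 1 := by
    ext x
    simp
  rw [h3] at h2
  exact h2.integral_comp ((rotE hij t).toIsometryEquiv.toHomeomorph.measurableEmbedding) h

theorem integral_tangential {n : ℕ} (hn : 2 ≤ n) (i j : Fin n) {U : Set (Euc n)} (hU : IsOpen U)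
    {Ψ : Euc n → ℝ} (hΨ : ContDiffOn ℝ 1 Ψ U) {r : ℝ}
    (hr : ∀ ξ ∈ sphere (0 : Euc n) 1, r • ξ ∈ U) (hr0 : r ≠ 0) :
    ∫ ξ, fderiv ℝ Ψ (r • ξ) (ξ i • EuclideanSpace.single j (1 : ℝ)
      - ξ j • EuclideanSpace.single i (1 : ℝ)) ∂(sphereMeasure n) = 0 := by
  rcases eq_or_ne i j with rfl | hij
  · simp
  let Q : ℝ × Euc n → Euc n := fun p => r • rotIJ i j p.1 p.2
  have hQ : ContDiff ℝ 1 Q := by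
    unfold Q rotIJ
    fun_prop
  have hG : ContDiffOn ℝ 1 (Ψ ∘ Q) (Q ⁻¹' U) := hΨ.comp hQ.contDiffOn (fun _ h => h)
  have hrot0 : ∀ ξ : Euc n, rotIJ i j 0 ξ = ξ := by intro ξ; simp [rotIJ]
  have hmem : ∀ ξ ∈ sphere (0 : Euc n) 1, ((0 : ℝ), ξ) ∈ Q ⁻¹' U := by
    intro ξ hξ; simpa [Q, hrot0] using hr ξ hξ
  have hd := hasDerivAt_sphere hn (hU.preimage hQ.continuous) hG hmem
  have hconst : (fun t => ∫ ξ, (Ψ ∘ Q) (t, ξ) ∂(sphereMeasure n))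
      = fun _ => ∫ ξ, Ψ (r • ξ) ∂(sphereMeasure n) := by
    funext t
    exact integral_rot hij t (fun ξ => Ψ (r • ξ))
  rw [hconst] at hd
  have hz := hd.unique (hasDerivAt_const _ _)
  have hz2 : ∫ ξ, r * fderiv ℝ Ψ (r • ξ) (ξ i • EuclideanSpace.single j (1 : ℝ)
      - ξ j • EuclideanSpace.single i (1 : ℝ)) ∂(sphereMeasure n) = 0 := by
    rw [← hz]
    apply integral_congr_ae
    filter_upwards [ae_sphere] with ξ hξ
    have e1 : HasFDerivAt Ψ (fderiv ℝ Ψ (r • ξ)) (Q (0, ξ)) := by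
      have : Q (0, ξ) = r • ξ := by simp [Q, hrot0]
      rw [this]
      exact ((hΨ.contDiffAt (hU.mem_nhds (hr ξ hξ))).differentiableAt one_ne_zero).hasFDerivAt
    have e2 : HasFDerivAt Q (fderiv ℝ Q (0, ξ)) (0, ξ) :=
      (hQ.differentiable one_ne_zero _).hasFDerivAt
    have e3 : HasDerivAt (fun s : ℝ => (s, ξ)) ((1 : ℝ), (0 : Euc n)) 0 :=
      (hasDerivAt_id _).prodMk (hasDerivAt_const _ ξ)
    have e4 : HasDerivAt (fun s : ℝ => Q (s, ξ)) (fderiv ℝ Q (0, ξ) (1, 0)) 0 :=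
      HasFDerivAt.comp_hasDerivAt (f := fun s : ℝ => (s, ξ)) (0 : ℝ) e2 e3
    have c1 : HasDerivAt (fun s : ℝ => (Real.cos s - 1)) 0 0 := by
      simpa using (Real.hasDerivAt_cos 0).sub_const 1
    have c2 : HasDerivAt (fun s : ℝ => Real.sin s) 1 0 := by
      simpa using (Real.hasDerivAt_sin 0)
    have e5 : HasDerivAt (fun s : ℝ => Q (s, ξ)) (r • (ξ i • EuclideanSpace.single j (1 : ℝ)
      - ξ j • EuclideanSpace.single i (1 : ℝ))) 0 := by
      have := (((((c1.mul_const (ξ i)).sub (c2.mul_const (ξ j))).smul_const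
        (EuclideanSpace.single i (1 : ℝ) : Euc n)).const_add ξ).add
        (((c2.mul_const (ξ i)).add (c1.mul_const (ξ j))).smul_const
        (EuclideanSpace.single j (1 : ℝ) : Euc n))).const_smul r
      refine HasDerivAt.congr_deriv (f := fun s : ℝ => Q (s, ξ)) this ?_
      simp [sub_eq_add_neg, add_comm]
    have e6 := e4.unique e5
    rw [(e1.comp _ e2).fderiv, ContinuousLinearMap.comp_apply, e6, map_smul, smul_eq_mul]
  rw [integral_const_mul] at hz2
  exact (mul_eq_zero.1 hz2).resolve_left hr0

theorem mem_closure_shell {n : ℕ} {a b : ℝ} (ha : 0 < a) (hab : a < b) {r : ℝ}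
    (hr : r ∈ Icc a b) {ξ : Euc n} (hξ : ξ ∈ sphere (0 : Euc n) 1) :
    r • ξ ∈ closure (shell n a b) := by
  have hξ1 : ‖ξ‖ = 1 := by simpa using hξ
  have h1 : MapsTo (fun s : ℝ => s • ξ) (Ioo a b) (shell n a b) := by
    intro s hs
    have : ‖s • ξ‖ = s := by
      rw [norm_smul, hξ1, mul_one, Real.norm_of_nonneg (ha.trans hs.1).le]
    simpa [shell, this] using hs
  have h2 := h1.closure (by fun_prop)
  rw [closure_Ioo hab.ne] at h2
  exact h2 hr

theorem mem_shell {n : ℕ} {a b : ℝ} (ha : 0 < a) {r : ℝ}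
    (hr : r ∈ Ioo a b) {ξ : Euc n} (hξ : ξ ∈ sphere (0 : Euc n) 1) :
    r • ξ ∈ shell n a b := by
  have hξ1 : ‖ξ‖ = 1 := by simpa using hξ
  have : ‖r • ξ‖ = r := by
    rw [norm_smul, hξ1, mul_one, Real.norm_of_nonneg (ha.trans hr.1).le]
  simpa [shell, this] using hr

theorem lap_eq {n : ℕ} {w : Euc n → ℝ} {x : Euc n} (hw : ContDiffAt ℝ 2 w x) :
    lap w x = ∑ i : Fin n, fderiv ℝ (fderiv ℝ w) x (EuclideanSpace.single i 1)
      (EuclideanSpace.single i 1) := by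
  have hd : DifferentiableAt ℝ (fderiv ℝ w) x :=
    (hw.fderiv_right (m := 1) (by norm_num)).differentiableAt one_ne_zero
  unfold lap
  refine Finset.sum_congr rfl fun i _ => ?_
  rw [fderiv_clm_apply hd (differentiableAt_const _)]
  simp

theorem sum_identity {n : ℕ} (φ : Euc n →L[ℝ] ℝ) (B : Euc n →L[ℝ] Euc n →L[ℝ] ℝ)
    (ξ : Euc n) (hξ : ‖ξ‖ = 1) (r : ℝ) :
    r * B ξ ξ + (n - 1 : ℝ) * φ ξ =
      r * ∑ i : Fin n, B (EuclideanSpace.single i 1) (EuclideanSpace.single i 1)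
      - ∑ i : Fin n, ∑ j : Fin n,
        (((ξ i • EuclideanSpace.single j (1 : ℝ) - ξ j • EuclideanSpace.single i (1 : ℝ) : Euc n) i)
          * φ (EuclideanSpace.single j 1)
        + (r * ξ i) * B (ξ i • EuclideanSpace.single j (1 : ℝ)
            - ξ j • EuclideanSpace.single i (1 : ℝ)) (EuclideanSpace.single j 1)) := by
  have hexp : ξ = ∑ i, ξ i • (EuclideanSpace.single i (1 : ℝ) : Euc n) := by
    ext k
    simp [Pi.single_apply]
  have hφ : φ ξ = ∑ j, ξ j * φ (EuclideanSpace.single j 1) := by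
    conv_lhs => rw [hexp]
    simp
  have hB : B ξ ξ = ∑ i, ∑ j, ξ i * (ξ j * B (EuclideanSpace.single i 1)
      (EuclideanSpace.single j 1)) := by
    conv_lhs => rw [hexp]
    simp only [map_sum, map_smul, FunLike.coe_sum, Finset.sum_apply,
      FunLike.coe_smul, Pi.smul_apply, smul_eq_mul, Finset.mul_sum]
    rw [Finset.sum_comm]
    refine Finset.sum_congr rfl fun i _ => Finset.sum_congr rfl fun j _ => ?_
    ring
  have hone : ∑ i, ξ i ^ 2 = 1 := by
    have := EuclideanSpace.norm_sq_eq ξ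
    rw [hξ] at this
    simpa using this.symm
  have h1 : ∑ i : Fin n, ∑ j : Fin n,
      ((ξ i • EuclideanSpace.single j (1 : ℝ) - ξ j • EuclideanSpace.single i (1 : ℝ) : Euc n) i)
          * φ (EuclideanSpace.single j 1) = φ ξ - n * φ ξ := by
    simp [sub_mul, Finset.sum_sub_distrib, ← hφ]
  have h2 : ∑ i : Fin n, ∑ j : Fin n,
      (r * ξ i) * B (ξ i • EuclideanSpace.single j (1 : ℝ)
            - ξ j • EuclideanSpace.single i (1 : ℝ)) (EuclideanSpace.single j 1)
      = r * ∑ i : Fin n, B (EuclideanSpace.single i 1) (EuclideanSpace.single i 1) - r * B ξ ξ := by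
    have : r * ∑ i : Fin n, B (EuclideanSpace.single i 1) (EuclideanSpace.single i 1)
      = (∑ i, ξ i ^ 2) *
        (r * ∑ i : Fin n, B (EuclideanSpace.single i 1) (EuclideanSpace.single i 1)) := by
      rw [hone, one_mul]
    rw [this, hB, Finset.mul_sum Finset.univ _ r, Finset.sum_mul_sum]
    simp only [Finset.mul_sum, ← Finset.sum_sub_distrib]
    refine Finset.sum_congr rfl fun i _ => ?_
    refine Finset.sum_congr rfl fun j _ => ?_
    simp
    ring
  simp only [Finset.sum_add_distrib]
  rw [h1, h2]
  ring

theorem flux_identity {n : ℕ} (hn : 2 ≤ n) {U : Set (Euc n)} (hU : IsOpen U)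
    {w : Euc n → ℝ} (hw : ContDiffOn ℝ 2 w U) {r : ℝ} (hr0 : r ≠ 0)
    (hr : ∀ ξ ∈ sphere (0 : Euc n) 1, r • ξ ∈ U) :
    r * (∫ ξ, fderiv ℝ (fderiv ℝ w) (r • ξ) ξ ξ ∂(sphereMeasure n))
      + (n - 1 : ℝ) * (∫ ξ, fderiv ℝ w (r • ξ) ξ ∂(sphereMeasure n))
      = r * ∫ ξ, lap w (r • ξ) ∂(sphereMeasure n) := by
  have hΦ : ContDiffOn ℝ 1 (fderiv ℝ w) U := hw.fderiv_of_isOpen hU (by norm_num)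
  have hB : ContinuousOn (fderiv ℝ (fderiv ℝ w)) U := hΦ.continuousOn_fderiv_of_isOpen hU le_rfl
  have hsc : ContinuousOn (fun ξ : Euc n => r • ξ) (sphere (0 : Euc n) 1) := by fun_prop
  have hBs : ContinuousOn (fun ξ => fderiv ℝ (fderiv ℝ w) (r • ξ)) (sphere (0 : Euc n) 1) :=
    hB.comp hsc hr
  have hΦs : ContinuousOn (fun ξ => fderiv ℝ w (r • ξ)) (sphere (0 : Euc n) 1) :=
    hΦ.continuousOn.comp hsc hr
  let Ψ : Fin n → Fin n → Euc n → ℝ := fun i j y => y i * fderiv ℝ w y (EuclideanSpace.single j 1)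
  have hΨ : ∀ i j, ContDiffOn ℝ 1 (Ψ i j) U := by
    intro i j
    have h1 : ContDiffOn ℝ 1 (fun y : Euc n => y i) U := by fun_prop
    exact h1.mul (hΦ.clm_apply contDiffOn_const)
  have hT : ∀ i j, Integrable (fun ξ : Euc n => fderiv ℝ (Ψ i j) (r • ξ)
      (ξ i • EuclideanSpace.single j (1 : ℝ)
      - ξ j • EuclideanSpace.single i (1 : ℝ))) (sphereMeasure n) := by
    intro i j
    apply integrable_sphere hn
    refine ContinuousOn.clm_apply ?_ (by fun_prop)
    exact ((hΨ i j).continuousOn_fderiv_of_isOpen hU le_rfl).comp hsc hr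
  have hI1 : Integrable (fun ξ => fderiv ℝ (fderiv ℝ w) (r • ξ) ξ ξ) (sphereMeasure n) :=
    integrable_sphere hn ((hBs.clm_apply continuousOn_id).clm_apply continuousOn_id)
  have hI2 : Integrable (fun ξ => fderiv ℝ w (r • ξ) ξ) (sphereMeasure n) :=
    integrable_sphere hn (hΦs.clm_apply continuousOn_id)
  have hcd : ∀ ξ ∈ sphere (0 : Euc n) 1, ContDiffAt ℝ 2 w (r • ξ) := fun ξ hξ =>
    hw.contDiffAt (hU.mem_nhds (hr ξ hξ))
  have hI3 : Integrable (fun ξ => lap w (r • ξ)) (sphereMeasure n) := by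
    apply integrable_sphere hn
    refine ContinuousOn.congr ?_ (fun ξ hξ => lap_eq (hcd ξ hξ))
    exact continuousOn_finsetSum _ fun i _ =>
      (hBs.clm_apply continuousOn_const).clm_apply continuousOn_const
  have key : ∫ ξ, (r * fderiv ℝ (fderiv ℝ w) (r • ξ) ξ ξ
      + (n - 1 : ℝ) * fderiv ℝ w (r • ξ) ξ) ∂(sphereMeasure n)
      = ∫ ξ, (r * lap w (r • ξ) - ∑ i : Fin n, ∑ j : Fin n, fderiv ℝ (Ψ i j) (r • ξ)
      (ξ i • EuclideanSpace.single j (1 : ℝ)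
      - ξ j • EuclideanSpace.single i (1 : ℝ))) ∂(sphereMeasure n) := by
    apply integral_congr_ae
    filter_upwards [ae_sphere] with ξ hξ
    rw [sum_identity _ _ ξ (by simpa using hξ) r, lap_eq (hcd ξ hξ)]
    congr 1
    refine Finset.sum_congr rfl fun i _ => Finset.sum_congr rfl fun j _ => ?_
    have hd : DifferentiableAt ℝ (fderiv ℝ w) (r • ξ) :=
      (hΦ.contDiffAt (hU.mem_nhds (hr ξ hξ))).differentiableAt one_ne_zero
    have d1 : HasFDerivAt (fun y : Euc n => y i) (EuclideanSpace.proj i : Euc n →L[ℝ] ℝ) (r • ξ) :=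
      (EuclideanSpace.proj i : Euc n →L[ℝ] ℝ).hasFDerivAt
    have d2 := hd.hasFDerivAt.clm_apply
      (hasFDerivAt_const (EuclideanSpace.single j (1 : ℝ) : Euc n) (r • ξ))
    have d3 : HasFDerivAt (Ψ i j) _ (r • ξ) := d1.mul d2
    rw [d3.fderiv]
    simp
    ring
  rw [integral_add (hI1.const_mul _) (hI2.const_mul _), integral_const_mul, integral_const_mul,
    integral_sub (hI3.const_mul _)
      (integrable_finsetSum _ fun i _ => integrable_finsetSum _ fun j _ => hT i j),
    integral_const_mul, integral_finsetSum _
      (fun i _ => integrable_finsetSum _ fun j _ => hT i j)] at key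
  rw [key, Finset.sum_eq_zero, sub_zero]
  intro i _
  rw [integral_finsetSum _ (fun j _ => hT i j), Finset.sum_eq_zero]
  intro j _
  exact integral_tangential hn i j hU (hΨ i j) hr hr0

/-- If `-Δu = f`, `-Δv = g` on a shell and `f`, `g` have equal means on every sphere
`{|x| = r}`, then `r ↦ r^(n-1) ∫_S ∂_r(u-v)(rξ) dσ(ξ)` is constant on `[a,b]`. -/
theorem radial_flux_constant_shell {n : ℕ} (hn : 2 ≤ n) {a b : ℝ} (ha : 0 < a) (hab : a < b)
    (u v f g : Euc n → ℝ)
    (hu : IsC2OnClosure u (shell n a b)) (hv : IsC2OnClosure v (shell n a b))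
    (hf : ContinuousOn f (closure (shell n a b))) (hg : ContinuousOn g (closure (shell n a b)))
    (hupde : ∀ x ∈ shell n a b, -lap u x = f x)
    (hvpde : ∀ x ∈ shell n a b, -lap v x = g x)
    (hfg : ∀ r ∈ Ioo a b,
      (∫ ξ in sphere (0 : Euc n) 1, f (r • ξ) ∂(sphereMeasure n)) =
        ∫ ξ in sphere (0 : Euc n) 1, g (r • ξ) ∂(sphereMeasure n)) :
    ∀ r₁ ∈ Icc a b, ∀ r₂ ∈ Icc a b,
      r₂ ^ (n - 1) *
          (∫ ξ in sphere (0 : Euc n) 1, fderiv ℝ (fun x => u x - v x) (r₂ • ξ) ξ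
            ∂(sphereMeasure n)) =
        r₁ ^ (n - 1) *
          (∫ ξ in sphere (0 : Euc n) 1, fderiv ℝ (fun x => u x - v x) (r₁ • ξ) ξ
            ∂(sphereMeasure n)) := by
  obtain ⟨U₁, hU₁, hs₁, hu⟩ := hu
  obtain ⟨U₂, hU₂, hs₂, hv⟩ := hv
  have hres : (sphereMeasure n).restrict (sphere (0 : Euc n) 1) = sphereMeasure n := by
    simp [sphereMeasure, Measure.restrict_restrict isClosed_sphere.measurableSet]
  simp only [hres] at hfg ⊢
  have hU : IsOpen (U₁ ∩ U₂) := hU₁.inter hU₂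
  generalize hwdef : (fun x => u x - v x) = w
  have hw : ContDiffOn ℝ 2 w (U₁ ∩ U₂) := by
    rw [← hwdef]
    exact (hu.mono inter_subset_left).sub (hv.mono inter_subset_right)
  have hr : ∀ r ∈ Icc a b, ∀ ξ ∈ sphere (0 : Euc n) 1, r • ξ ∈ U₁ ∩ U₂ := fun r hr ξ hξ =>
    ⟨hs₁ (mem_closure_shell ha hab hr hξ), hs₂ (mem_closure_shell ha hab hr hξ)⟩
  have hlap : ∀ r ∈ Ioo a b, ∫ ξ, lap w (r • ξ) ∂(sphereMeasure n) = 0 := by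
    intro r hrI
    have hI : ∀ h : Euc n → ℝ, ContinuousOn h (closure (shell n a b)) →
        Integrable (fun ξ => h (r • ξ)) (sphereMeasure n) := fun h hh =>
      integrable_sphere hn (hh.comp (by fun_prop)
        fun ξ hξ => mem_closure_shell ha hab (Ioo_subset_Icc_self hrI) hξ)
    have : ∫ ξ, lap w (r • ξ) ∂(sphereMeasure n)
        = ∫ ξ, (g (r • ξ) - f (r • ξ)) ∂(sphereMeasure n) := by
      apply integral_congr_ae
      filter_upwards [ae_sphere] with ξ hξ
      have hm := hr r (Ioo_subset_Icc_self hrI) ξ hξ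
      have hsh := mem_shell ha hrI hξ
      rw [← hupde _ hsh, ← hvpde _ hsh]
      have c1 : ContDiffAt ℝ 2 u (r • ξ) := hu.contDiffAt (hU₁.mem_nhds hm.1)
      have c2 : ContDiffAt ℝ 2 v (r • ξ) := hv.contDiffAt (hU₂.mem_nhds hm.2)
      have d1 : DifferentiableAt ℝ (fderiv ℝ u) (r • ξ) :=
        (c1.fderiv_right (m := 1) (by norm_num)).differentiableAt one_ne_zero
      have d2 : DifferentiableAt ℝ (fderiv ℝ v) (r • ξ) :=
        (c2.fderiv_right (m := 1) (by norm_num)).differentiableAt one_ne_zero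
      have hfd : fderiv ℝ w =ᶠ[nhds (r • ξ)] fun x => fderiv ℝ u x - fderiv ℝ v x := by
        filter_upwards [hU.mem_nhds hm] with x hx
        rw [← hwdef]
        exact fderiv_fun_sub
          ((hu.contDiffAt (hU₁.mem_nhds hx.1)).differentiableAt two_ne_zero)
          ((hv.contDiffAt (hU₂.mem_nhds hx.2)).differentiableAt two_ne_zero)
      rw [lap_eq (hw.contDiffAt (hU.mem_nhds hm)), lap_eq c1, lap_eq c2, hfd.fderiv_eq,
        fderiv_fun_sub d1 d2]
      simp [Finset.sum_sub_distrib]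
      ring
    rw [this, integral_sub (hI g hg) (hI f hf), hfg r hrI, sub_self]
  -- derivative of the mean radial derivative
  have hΦ : ContDiffOn ℝ 1 (fderiv ℝ w) (U₁ ∩ U₂) := hw.fderiv_of_isOpen hU (by norm_num)
  have hH : ∀ r ∈ Icc a b, HasDerivAt (fun s => ∫ ξ, fderiv ℝ w (s • ξ) ξ ∂(sphereMeasure n))
      (∫ ξ, fderiv ℝ (fderiv ℝ w) (r • ξ) ξ ξ ∂(sphereMeasure n)) r := by
    intro r hrI
    let Q : ℝ × Euc n → Euc n := fun p => p.1 • p.2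
    have hQ : ContDiff ℝ 1 Q := by unfold Q; fun_prop
    have hG : ContDiffOn ℝ 1 (fun p : ℝ × Euc n => fderiv ℝ w (Q p) p.2) (Q ⁻¹' (U₁ ∩ U₂)) :=
      (hΦ.comp hQ.contDiffOn (fun _ h => h)).clm_apply contDiffOn_snd
    have := hasDerivAt_sphere hn (hU.preimage hQ.continuous) hG (t₀ := r)
      (fun ξ hξ => hr r hrI ξ hξ)
    refine this.congr_deriv ?_
    apply integral_congr_ae
    filter_upwards [ae_sphere] with ξ hξ
    have hm := hr r hrI ξ hξ
    have e0 : DifferentiableAt ℝ (fun p : ℝ × Euc n => fderiv ℝ w (Q p) p.2) (r, ξ) :=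
      (hG.contDiffAt ((hU.preimage hQ.continuous).mem_nhds hm)).differentiableAt one_ne_zero
    have e3 : HasDerivAt (fun s : ℝ => (s, ξ)) ((1 : ℝ), (0 : Euc n)) r :=
      (hasDerivAt_id _).prodMk (hasDerivAt_const _ ξ)
    have e4 := HasFDerivAt.comp_hasDerivAt (f := fun s : ℝ => (s, ξ)) r e0.hasFDerivAt e3
    have e5 : HasDerivAt (fun s : ℝ => s • ξ) ξ r := by
      simpa using (hasDerivAt_id r).smul_const ξ
    have e6 : HasFDerivAt (fderiv ℝ w) (fderiv ℝ (fderiv ℝ w) (r • ξ)) (r • ξ) :=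
      ((hΦ.contDiffAt (hU.mem_nhds hm)).differentiableAt one_ne_zero).hasFDerivAt
    have e7 := HasFDerivAt.comp_hasDerivAt (f := fun s : ℝ => s • ξ) r e6 e5
    have e8 := e7.clm_apply (hasDerivAt_const r ξ)
    have e9 := e4.unique e8
    rw [e9]
    simp
  set H : ℝ → ℝ := fun s => ∫ ξ, fderiv ℝ w (s • ξ) ξ ∂(sphereMeasure n) with hHdef
  have hder : ∀ r ∈ Icc a b, HasDerivAt (fun s => s ^ (n - 1) * H s)
      (((n - 1 : ℕ) : ℝ) * r ^ (n - 1 - 1) * H r + r ^ (n - 1) *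
        ∫ ξ, fderiv ℝ (fderiv ℝ w) (r • ξ) ξ ξ ∂(sphereMeasure n)) r :=
    fun r hrI => (hasDerivAt_pow (n - 1) r).mul (hH r hrI)
  have hzero : ∀ r ∈ Ioo a b, HasDerivAt (fun s => s ^ (n - 1) * H s) 0 r := by
    intro r hrI
    refine (hder r (Ioo_subset_Icc_self hrI)).congr_deriv ?_
    have hid := flux_identity hn hU hw (ha.trans hrI.1).ne' (hr r (Ioo_subset_Icc_self hrI))
    rw [hlap r hrI, mul_zero] at hid
    obtain ⟨m, rfl⟩ : ∃ m, n = m + 2 := ⟨n - 2, by omega⟩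
    simp only [Nat.add_sub_cancel, show m + 2 - 1 = m + 1 by omega, hHdef]
    push_cast at hid ⊢
    rw [pow_succ]
    linear_combination r ^ m * hid
  have hcont : ContinuousOn (fun s => s ^ (n - 1) * H s) (Icc a b) := fun r hrI =>
    (hder r hrI).continuousAt.continuousWithinAt
  have hall : ∀ r ∈ Icc a b, r ^ (n - 1) * H r = a ^ (n - 1) * H a := by
    intro r hrI
    rcases eq_or_lt_of_le hrI.1 with rfl | hlt
    · rfl
    obtain ⟨c, hc, hc2⟩ := exists_hasDerivAt_eq_slope (fun s => s ^ (n - 1) * H s) (fun _ => 0) hlt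
      (hcont.mono (Icc_subset_Icc_right hrI.2))
      (fun x hx => hzero x ⟨hx.1, hx.2.trans_le hrI.2⟩)
    have : r - a ≠ 0 := sub_ne_zero.2 hlt.ne'
    field_simp at hc2
    linarith
  intro r₁ h₁ r₂ h₂
  rw [hall r₁ h₁, hall r₂ h₂]
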